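/- arXiv:1511.05346 — 2 statements merged into one kernel-verified Lean document; each statement's English description precedes it below -/
import Mathlib

section
/- Let S₂(n) be the number of ordered pairs of integers (p, q) with p > 0, q ≥ 0 and p² + q² = n. Then the number of orbits of the multiplication-by-i action on the set of index-n subgroups of ℤ[i] (as an additive lattice) equals (σ₁(n) + S₂(n))/2, for n > 2. -/
/-- `S₂(n)`: the number of ordered integer pairs `(p, q)` with `p > 0`, `q ≥ 0`
and `p² + q² = n`. -/
noncomputable def S2 (n : ℕ) : ℕ :=
  Nat.card {pq : ℤ × ℤ // 0 < pq.1 ∧ 0 ≤ pq.2 ∧ pq.1 ^ 2 + pq.2 ^ 2 = n}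


/-- Hermite normal form lattice. -/
def hnfL (a d b : ℤ) : AddSubgroup GaussianInt where
  carrier := {z | ∃ k l : ℤ, z.re = a * k ∧ z.im = b * k + d * l}
  zero_mem' := ⟨0, 0, by simp, by simp⟩
  add_mem' := by
    rintro x y ⟨k, l, h1, h2⟩ ⟨k', l', h3, h4⟩
    exact ⟨k + k', l + l', by simp [h1, h3]; ring, by simp [h2, h4]; ring⟩
  neg_mem' := by
    rintro x ⟨k, l, h1, h2⟩
    exact ⟨-k, -l, by simp [h1], by simp [h2]; ring⟩

lemma mem_hnfL {a d b : ℤ} {z : GaussianInt} :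
    z ∈ hnfL a d b ↔ ∃ k l : ℤ, z.re = a * k ∧ z.im = b * k + d * l := Iff.rfl

/-- real part as a hom. -/
def reHom : GaussianInt →+ ℤ where
  toFun z := z.re
  map_zero' := rfl
  map_add' _ _ := rfl

/-- embedding of the imaginary axis. -/
def imEmb : ℤ →+ GaussianInt where
  toFun y := ⟨0, y⟩
  map_zero' := rfl
  map_add' x y := by ext <;> simp

/-- auxiliary hom. -/
def phiHom (a b : ℤ) : (AddSubgroup.zmultiples a).comap reHom →+ ℤ where
  toFun z := z.1.im - b * (z.1.re / a)
  map_zero' := by simp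
  map_add' := by
    rintro ⟨x, hx⟩ ⟨y, hy⟩
    have hx' : a ∣ x.re := Int.mem_zmultiples_iff.1 hx
    simp [Int.add_ediv_of_dvd_left hx']
    ring

lemma hnfL_index (a d b : ℤ) (ha : a ≠ 0) : (hnfL a d b).index = d.natAbs * a.natAbs := by
  have hle : hnfL a d b ≤ (AddSubgroup.zmultiples a).comap reHom := by
    rintro z ⟨k, l, h1, h2⟩
    exact Int.mem_zmultiples_iff.2 ⟨k, h1⟩
  rw [← AddSubgroup.relIndex_mul_index hle,
    AddSubgroup.index_comap_of_surjective _ (f := reHom) (fun x => ⟨⟨x, 0⟩, rfl⟩),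
    Int.index_zmultiples]
  congr 1
  have : (hnfL a d b).addSubgroupOf ((AddSubgroup.zmultiples a).comap reHom) =
      (AddSubgroup.zmultiples d).comap (phiHom a b) := by
    ext ⟨z, hz⟩
    have hz' : a ∣ z.re := Int.mem_zmultiples_iff.1 hz
    rw [AddSubgroup.mem_addSubgroupOf, AddSubgroup.mem_comap, Int.mem_zmultiples_iff, mem_hnfL]
    change _ ↔ d ∣ z.im - b * (z.re / a)
    obtain ⟨k, hk⟩ := hz'
    rw [hk, Int.mul_ediv_cancel_left _ ha]
    constructor
    · rintro ⟨k', l, h1, h2⟩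
      have : k = k' := by
        have : a * k = a * k' := h1
        exact mul_left_cancel₀ ha this
      subst this
      exact ⟨l, by simp only at h2; rw [h2]; ring⟩
    · rintro ⟨l, hl⟩
      exact ⟨k, l, rfl, by simp only; linarith⟩
  rw [AddSubgroup.relIndex, this, AddSubgroup.index_comap_of_surjective, Int.index_zmultiples]
  intro y
  exact ⟨⟨⟨0, y⟩, (AddSubgroup.zmultiples a).zero_mem⟩, by simp [phiHom]⟩

lemma hnfL_exists (M : AddSubgroup GaussianInt) (hM : M.index ≠ 0) :
    ∃ a d b : ℕ, 0 < a ∧ b < d ∧ M = hnfL a d b := by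
  obtain ⟨a0, ha0⟩ := Int.subgroup_cyclic (M.map reHom)
  obtain ⟨d0, hd0⟩ := Int.subgroup_cyclic (M.comap imEmb)
  rw [← AddSubgroup.zmultiples_eq_closure, ← Int.zmultiples_natAbs] at ha0 hd0
  generalize a0.natAbs = a at ha0
  generalize d0.natAbs = d at hd0
  have hA : ∀ x : ℤ, (∃ z ∈ M, z.re = x) ↔ (a : ℤ) ∣ x := by
    intro x
    rw [← Int.mem_zmultiples_iff, ← ha0]; rfl
  have hD : ∀ y : ℤ, (⟨0, y⟩ : GaussianInt) ∈ M ↔ (d : ℤ) ∣ y := by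
    intro x
    rw [← Int.mem_zmultiples_iff, ← hd0]; rfl
  have ha : 0 < a := by
    rw [Nat.pos_iff_ne_zero]
    rintro rfl
    have := (hA M.index).1 ⟨_, M.nsmul_index_mem 1, by simp⟩
    simp at this; exact hM (by simpa using this)
  have hd : 0 < d := by
    rw [Nat.pos_iff_ne_zero]
    rintro rfl
    have h2 := M.nsmul_index_mem (⟨0, 1⟩ : GaussianInt)
    have h3 : M.index • (⟨0, 1⟩ : GaussianInt) = ⟨0, M.index⟩ := by ext <;> simp
    rw [h3] at h2
    have := (hD M.index).1 h2
    simp at this; exact hM (by simpa using this)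
  obtain ⟨w, hw, hwre⟩ := (hA a).2 dvd_rfl
  have hdz : (0 : ℤ) < d := by exact_mod_cast hd
  obtain ⟨b, hb⟩ := Int.eq_ofNat_of_zero_le (Int.emod_nonneg w.im hdz.ne')
  have hlt := Int.emod_lt_of_pos w.im hdz
  refine ⟨a, d, b, ha, by omega, ?_⟩
  have hwim : w.im = b + d * (w.im / d) := by rw [← hb]; exact (Int.emod_add_mul_ediv _ _).symm
  generalize w.im / d = t at hwim
  ext z
  rw [mem_hnfL]
  have key : ∀ k : ℤ, z.re = a * k → (z ∈ M ↔ (d : ℤ) ∣ z.im - k * w.im) := by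
    intro k hk
    rw [← hD]
    have : z = ⟨0, z.im - k * w.im⟩ + k • w := by ext <;> simp [hk, hwre]; ring
    have hk : k • w ∈ M := M.zsmul_mem hw k
    nth_rewrite 1 [this]
    exact M.add_mem_cancel_right hk
  constructor
  · intro hz
    obtain ⟨k, hk⟩ := (hA z.re).1 ⟨z, hz, rfl⟩
    obtain ⟨l, hl⟩ := (key k hk).1 hz
    exact ⟨k, l + k * t, hk, by rw [hwim] at hl; linarith⟩
  · rintro ⟨k, l, h1, h2⟩
    rw [key k h1]
    exact ⟨l - k * t, by rw [h2, hwim]; ring⟩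

lemma hnfL_inj {a d b a' d' b' : ℕ} (ha : 0 < a) (ha' : 0 < a') (hb : b < d) (hb' : b' < d')
    (h : hnfL a d b = hnfL a' d' b') : a = a' ∧ d = d' ∧ b = b' := by
  have hle : ∀ {a d b a' d' b' : ℕ}, 0 < a → 0 < a' → b < d → b' < d' → 
      hnfL a d b = hnfL a' d' b' → a' ∣ a ∧ d' ∣ d := by
    intro a d b a' d' b' ha ha' hb hb' h
    constructor
    · have : (⟨a, b⟩ : GaussianInt) ∈ hnfL a' d' b' := h ▸ ⟨1, 0, by simp, by simp⟩
      obtain ⟨k, l, h1, h2⟩ := this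
      exact Int.natCast_dvd_natCast.1 ⟨k, h1⟩
    · have : (⟨0, d⟩ : GaussianInt) ∈ hnfL a' d' b' := h ▸ ⟨0, 1, by simp, by simp⟩
      obtain ⟨k, l, h1, h2⟩ := this
      have : k = 0 := by
        have : (a' : ℤ) * k = 0 := h1.symm
        rcases mul_eq_zero.1 this with h | h
        · omega
        · exact h
      subst this
      exact Int.natCast_dvd_natCast.1 ⟨l, by simpa using h2⟩
  obtain ⟨h1, h2⟩ := hle ha ha' hb hb' h
  obtain ⟨h3, h4⟩ := hle ha' ha hb' hb h.symm
  obtain rfl := Nat.dvd_antisymm h1 h3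
  obtain rfl := Nat.dvd_antisymm h2 h4
  refine ⟨rfl, rfl, ?_⟩
  have : (⟨a', b⟩ : GaussianInt) ∈ hnfL a' d' b' := h ▸ ⟨1, 0, by simp, by simp⟩
  obtain ⟨k, l, h1, h2⟩ := this
  have : k = 1 := by
    have h1 : (a' : ℤ) * k = a' * 1 := by simpa using h1.symm
    exact mul_left_cancel₀ (by omega) h1
  subst this
  have h5 : (b : ℤ) = b' * 1 + d' * l := h2
  have : (b : ℤ) % d' = (b' : ℤ) % d' := by rw [h5]; simp
  rw [Int.emod_eq_of_lt (by omega) (by omega), Int.emod_eq_of_lt (by omega) (by omega)] at this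
  exact_mod_cast this

/-- parametrization of index-n subgroups. -/
noncomputable def hnfEquiv (n : ℕ) (hn : 0 < n) :
    (Σ d : n.divisors, Fin d.1) ≃ {M : AddSubgroup GaussianInt // M.index = n} :=
  Equiv.ofBijective
    (fun x => ⟨hnfL ((n / x.1.1 : ℕ)) x.1.1 (x.2 : ℕ), by
      have hd := Nat.dvd_of_mem_divisors x.1.2
      have : n / x.1.1 ≠ 0 := (Nat.div_pos (Nat.le_of_dvd hn hd) (Nat.pos_of_dvd_of_pos hd hn)).ne'
      rw [hnfL_index _ _ _ (by exact_mod_cast this)]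
      simp only [Int.natAbs_natCast]
      exact Nat.mul_div_cancel' hd⟩) (by
    constructor
    · rintro ⟨⟨d, hd⟩, ⟨b, hb⟩⟩ ⟨⟨d', hd'⟩, ⟨b', hb'⟩⟩ h
      have hd := Nat.dvd_of_mem_divisors hd
      have hd' := Nat.dvd_of_mem_divisors hd'
      obtain ⟨-, h1, h2⟩ := hnfL_inj (Nat.div_pos (Nat.le_of_dvd hn hd) (Nat.pos_of_dvd_of_pos hd hn))
        (Nat.div_pos (Nat.le_of_dvd hn hd') (Nat.pos_of_dvd_of_pos hd' hn)) hb hb'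
        (Subtype.ext_iff.1 h)
      subst h1 h2
      rfl
    · rintro ⟨M, hM⟩
      obtain ⟨a, d, b, ha, hb, rfl⟩ := hnfL_exists M (by omega)
      rw [hnfL_index _ _ _ (by omega)] at hM
      simp only [Int.natAbs_natCast] at hM
      refine ⟨⟨⟨d, by simp [← hM]; omega⟩, ⟨b, hb⟩⟩, ?_⟩
      have : n / d = a := by rw [← hM]; exact Nat.mul_div_cancel_left _ (by omega)
      simp [this])

lemma card_index (n : ℕ) (hn : 0 < n) :
    Nat.card {M : AddSubgroup GaussianInt // M.index = n} = ArithmeticFunction.sigma 1 n := by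
  rw [← Nat.card_congr (hnfEquiv n hn), ArithmeticFunction.sigma_one_apply]
  simp [Nat.card_eq_fintype_card, Finset.sum_attach n.divisors (fun d => d)]

lemma invol_count {X : Type*} [Finite X] (f : X → X) (hf : ∀ x, f (f x) = x)
    (r : X → X → Prop) (hr : ∀ x y, r x y ↔ y = x ∨ y = f x) :
    2 * Nat.card (Quot r) = Nat.card X + Nat.card {x // f x = x} := by
  classical
  have := Fintype.ofFinite X
  have := Fintype.ofFinite (Quot r)
  have hmk : ∀ x y, Quot.mk r y = Quot.mk r x ↔ y = x ∨ y = f x := by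
    intro x y
    constructor
    · intro h
      have h2 := Quot.eqvGen_exact h
      clear h
      induction h2 with
      | rel x y h => rcases (hr _ _).1 h with rfl | rfl <;> simp [hf]
      | refl x => simp
      | symm x y _ ih => rcases ih with rfl | rfl <;> simp [hf]
      | trans x y z _ _ ih ih' => 
        rcases ih with rfl | rfl <;> rcases ih' with rfl | rfl <;> simp [hf]
    · rintro (rfl | rfl)
      · rfl
      · exact (Quot.sound ((hr _ _).2 (Or.inr rfl))).symm
  simp only [Nat.card_eq_fintype_card, Fintype.card_subtype]
  rw [← Finset.card_univ (α := X),
    Finset.card_eq_sum_card_fiberwise (f := Quot.mk r) (t := Finset.univ) (by simp),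
    Finset.card_eq_sum_card_fiberwise (s := Finset.univ.filter (fun x => f x = x))
      (f := Quot.mk r) (t := Finset.univ) (by simp),
    ← Finset.sum_add_distrib, Finset.sum_const_nat (m := 2), Finset.card_univ, mul_comm]
  rintro q -
  induction q using Quot.ind with | mk x => ?_
  have h1 : Finset.univ.filter (fun y => Quot.mk r y = Quot.mk r x) = {x, f x} := by
    ext y; simp [hmk]
  have h2 : (Finset.univ.filter (fun x => f x = x)).filter (fun y => Quot.mk r y = Quot.mk r x)
      = if f x = x then {x} else ∅ := by
    ext y; split_ifs with h
    · simp [hmk, h]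
      rintro rfl; exact h
    · simp [hmk]
      rintro h3 
      constructor
      · rintro rfl; exact h h3
      · rintro rfl; rw [hf] at h3; exact h h3.symm
  rw [h1, h2]
  split_ifs with h
  · simp [h]
  · rw [Finset.card_pair (Ne.symm h)]; simp

/-- The additive subgroup of multiples of `z`. -/
def idl (z : GaussianInt) : AddSubgroup GaussianInt := (AddMonoidHom.mulLeft z).range

lemma mem_idl {z w : GaussianInt} : w ∈ idl z ↔ z ∣ w := by
  constructor
  · rintro ⟨u, rfl⟩; exact ⟨u, rfl⟩
  · rintro ⟨u, rfl⟩; exact ⟨u, rfl⟩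

lemma idl_mul_index (z w : GaussianInt) (hz : z ≠ 0) :
    (idl (z * w)).index = (idl w).index * (idl z).index := by
  have h : idl (z * w) = (idl w).map (AddMonoidHom.mulLeft z) := by
    ext x
    rw [mem_idl]
    constructor
    · rintro ⟨u, rfl⟩
      exact ⟨w * u, ⟨u, rfl⟩, by simp [mul_assoc]⟩
    · rintro ⟨_, ⟨u, rfl⟩, rfl⟩
      exact ⟨u, by simp [mul_assoc]⟩
  rw [h, AddSubgroup.index_map_of_injective _ (f := AddMonoidHom.mulLeft z)]
  · rfl
  · intro x y hxy
    exact mul_left_cancel₀ hz hxy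

lemma idl_star_index (z : GaussianInt) : (idl (star z)).index = (idl z).index := by
  have h : idl (star z) = (idl z).map (starAddEquiv : GaussianInt ≃+ GaussianInt).toAddMonoidHom := by
    ext x
    rw [mem_idl]
    constructor
    · rintro ⟨u, rfl⟩
      exact ⟨z * star u, ⟨star u, rfl⟩, by simp [mul_comm]⟩
    · rintro ⟨_, ⟨u, rfl⟩, rfl⟩
      exact ⟨star u, by simp [mul_comm]⟩
  rw [h]
  rw [AddSubgroup.index_map_of_bijective]
  exact (starAddEquiv : GaussianInt ≃+ GaussianInt).bijective

lemma idl_int_index (m : ℤ) (hm : m ≠ 0) : (idl (m : GaussianInt)).index = m.natAbs * m.natAbs := by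
  rw [← hnfL_index m m 0 hm]
  congr 1
  ext x
  rw [mem_idl, mem_hnfL]
  constructor
  · rintro ⟨u, rfl⟩
    exact ⟨u.re, u.im, by simp, by simp⟩
  · rintro ⟨k, l, h1, h2⟩
    exact ⟨⟨k, l⟩, by ext <;> simp [h1, h2]⟩

lemma idl_index (z : GaussianInt) (hz : z ≠ 0) : (idl z).index = z.norm.natAbs := by
  have h := idl_int_index z.norm (by rwa [Ne, GaussianInt.norm_eq_zero])
  rw [Zsqrtd.norm_eq_mul_conj, idl_mul_index _ _ hz, idl_star_index] at h
  exact Nat.mul_self_inj.1 h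

lemma exists_quadrant (z : GaussianInt) (hz : z ≠ 0) :
    ∃ p q : ℤ, 0 < p ∧ 0 ≤ q ∧ idl z = idl ⟨p, q⟩ := by
  have key : ∀ u v w : GaussianInt, v * w = 1 → z * v = u → idl z = idl u := by
    rintro u v w hvw rfl
    ext x
    rw [mem_idl, mem_idl]
    have : IsUnit v := IsUnit.of_mul_eq_one _ hvw
    exact (this.mul_right_dvd).symm
  obtain ⟨x, y⟩ := z
  have hne : x ≠ 0 ∨ y ≠ 0 := by
    by_contra! h
    exact hz (by rw [h.1, h.2]; rfl)
  rcases lt_trichotomy x 0 with hx | hx | hx <;> rcases lt_trichotomy y 0 with hy | hy | hy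
  · exact ⟨-x, -y, by omega, by omega, key _ (-1) (-1) (by simp) (by ext <;> simp)⟩
  · exact ⟨-x, -y, by omega, by omega, key _ (-1) (-1) (by simp) (by ext <;> simp)⟩
  · exact ⟨y, -x, by omega, by omega, key _ ⟨0, -1⟩ ⟨0, 1⟩ (by ext <;> simp) (by ext <;> simp)⟩
  · exact ⟨-y, x, by omega, by omega, key _ ⟨0, 1⟩ ⟨0, -1⟩ (by ext <;> simp) (by ext <;> simp)⟩
  · omega
  · exact ⟨y, -x, by omega, by omega, key _ ⟨0, -1⟩ ⟨0, 1⟩ (by ext <;> simp) (by ext <;> simp)⟩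
  · exact ⟨-y, x, by omega, by omega, key _ ⟨0, 1⟩ ⟨0, -1⟩ (by ext <;> simp) (by ext <;> simp)⟩
  · exact ⟨x, y, by omega, by omega, rfl⟩
  · exact ⟨x, y, by omega, by omega, rfl⟩

lemma quadrant_unique {p q p' q' : ℤ} (hp : 0 < p) (hq : 0 ≤ q) (hp' : 0 < p') (hq' : 0 ≤ q')
    (h : idl ⟨p, q⟩ = idl ⟨p', q'⟩) : p = p' ∧ q = q' := by
  have h1 : (⟨p, q⟩ : GaussianInt) ∣ ⟨p', q'⟩ := by
    rw [← mem_idl, h, mem_idl]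
  have h2 : (⟨p', q'⟩ : GaussianInt) ∣ ⟨p, q⟩ := by
    rw [← mem_idl, ← h, mem_idl]
  obtain ⟨u, hu⟩ := associated_of_dvd_dvd h1 h2
  have hn : (u : GaussianInt).norm = 1 := (Zsqrtd.norm_eq_one_iff' (by norm_num) _).2 u.isUnit
  obtain ⟨⟨a, b⟩, v, h3, h4⟩ := u
  simp only [Zsqrtd.norm_def] at hn
  have e1 := congrArg Zsqrtd.re hu
  have e2 := congrArg Zsqrtd.im hu
  simp at e1 e2
  have ha : a ≤ 1 := by nlinarith [mul_self_nonneg b]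
  have ha' : -1 ≤ a := by nlinarith [mul_self_nonneg b]
  have hb : b ≤ 1 := by nlinarith [mul_self_nonneg a]
  have hb' : -1 ≤ b := by nlinarith [mul_self_nonneg a]
  interval_cases a <;> interval_cases b <;> simp at hn e1 e2 <;> omega

/-- Multiplication by `i` on index-`n` subgroups. -/
def mulI (n : ℕ) (M : {M : AddSubgroup GaussianInt // M.index = n}) :
    {M : AddSubgroup GaussianInt // M.index = n} :=
  ⟨M.1.map (AddMonoidHom.mulLeft (⟨0, 1⟩ : GaussianInt)), by
    rw [AddSubgroup.index_map_of_bijective]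
    · exact M.2
    · have h : ∀ x : GaussianInt, ⟨0, 1⟩ * (⟨0, -1⟩ * x) = x := fun x => by ext <;> simp
      have h' : ∀ x : GaussianInt, ⟨0, -1⟩ * (⟨0, 1⟩ * x) = x := fun x => by ext <;> simp
      exact Function.bijective_iff_has_inverse.2 ⟨fun x : GaussianInt => (⟨0, -1⟩ : GaussianInt) * x, h', h⟩⟩

lemma map_map_I (M : AddSubgroup GaussianInt) (z w : GaussianInt) :
    (M.map (AddMonoidHom.mulLeft z)).map (AddMonoidHom.mulLeft w) =
      M.map (AddMonoidHom.mulLeft (w * z)) := by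
  rw [AddSubgroup.map_map]
  congr 1
  ext x <;> simp [mul_assoc]

lemma map_neg_one (M : AddSubgroup GaussianInt) :
    M.map (AddMonoidHom.mulLeft (-1)) = M := by
  ext x
  constructor
  · rintro ⟨y, hy, rfl⟩
    simpa using hy
  · intro hx
    exact ⟨-x, by simpa using hx, by simp⟩

lemma I_sq : (⟨0, 1⟩ : GaussianInt) * ⟨0, 1⟩ = -1 := by ext <;> simp

lemma mulI_mulI (n : ℕ) (M) : mulI n (mulI n M) = M := by
  apply Subtype.ext
  simp only [mulI]
  rw [map_map_I, I_sq, map_neg_one]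

lemma rel_iff (n : ℕ) (M N : {M : AddSubgroup GaussianInt // M.index = n}) :
    (∃ k : ℕ, (N : AddSubgroup GaussianInt) =
        AddSubgroup.map (AddMonoidHom.mulLeft ((⟨0, 1⟩ : GaussianInt) ^ k))
          (M : AddSubgroup GaussianInt)) ↔ N = M ∨ N = mulI n M := by
  have h1 : M.1.map (AddMonoidHom.mulLeft 1) = M.1 := by
    ext x
    simp
  constructor
  · rintro ⟨k, hk⟩
    induction k generalizing N with
    | zero =>
      left
      apply Subtype.ext
      rw [hk, pow_zero, h1]
    | succ k ih =>
      rw [pow_succ', ← map_map_I] at hk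
      have h2 := congrArg (AddSubgroup.map (AddMonoidHom.mulLeft (⟨0, 1⟩ : GaussianInt))) hk
      rw [map_map_I _ _ ⟨0, 1⟩, I_sq, map_neg_one] at h2
      have h3 : N = mulI n (mulI n N) := (mulI_mulI n N).symm
      rcases ih (mulI n N) h2 with h | h
      · right; rw [h3, h]
      · left; rw [h3, h, mulI_mulI]
  · rintro (rfl | rfl)
    · exact ⟨0, by rw [pow_zero, h1]⟩
    · exact ⟨1, by rw [pow_one]; rfl⟩

lemma card_fixed (n : ℕ) (hn : 0 < n) : Nat.card {M // mulI n M = M} = S2 n := by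
  symm
  have hne : ∀ p q : ℤ, 0 < p → (⟨p, q⟩ : GaussianInt) ≠ 0 := by
    intro p q hp h
    have := congrArg Zsqrtd.re h
    simp at this
    omega
  refine Nat.card_congr (Equiv.ofBijective (fun x => ⟨⟨idl ⟨x.1.1, x.1.2⟩, ?_⟩, ?_⟩) ⟨?_, ?_⟩)
  · obtain ⟨⟨p, q⟩, hp, hq, h⟩ := x
    rw [idl_index _ (hne _ _ hp), Zsqrtd.norm_def]
    simp only at h ⊢
    have : p * p - -1 * q * q = n := by rw [← h]; ring
    rw [this]; simp
  · apply Subtype.ext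
    ext y
    simp only [mulI]
    rw [mem_idl]
    constructor
    · rintro ⟨_, ⟨u, rfl⟩, rfl⟩
      exact ⟨⟨0, 1⟩ * u, mul_left_comm _ _ _⟩
    · rintro ⟨u, rfl⟩
      refine ⟨_, ⟨⟨0, -1⟩ * u, rfl⟩, ?_⟩
      ext <;> simp <;> ring
  · rintro ⟨⟨p, q⟩, hp, hq, h⟩ ⟨⟨p', q'⟩, hp', hq', h'⟩ e
    obtain ⟨rfl, rfl⟩ := quadrant_unique hp hq hp' hq' (congrArg (fun M => M.1.1) e)
    rfl
  · rintro ⟨⟨M, hM⟩, hf⟩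
    have hf' : M.map (AddMonoidHom.mulLeft (⟨0, 1⟩ : GaussianInt)) = M := congrArg Subtype.val hf
    have hI : ∀ x ∈ M, (⟨0, 1⟩ : GaussianInt) * x ∈ M := by
      intro x hx
      rw [← hf']
      exact ⟨x, hx, rfl⟩
    let J : Ideal GaussianInt :=
      { carrier := M
        zero_mem' := M.zero_mem
        add_mem' := fun h1 h2 => M.add_mem h1 h2
        smul_mem' := by
          intro c x hx
          have : c • x = c.re • x + c.im • ((⟨0, 1⟩ : GaussianInt) * x) := by
            ext <;> simp <;> ring
          rw [this]
          exact M.add_mem (M.zsmul_mem hx _) (M.zsmul_mem (hI x hx) _) }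
    obtain ⟨z, hz⟩ := (IsPrincipalIdealRing.principal J).principal
    have hMz : M = idl z := by
      ext x
      rw [mem_idl, ← Ideal.mem_span_singleton]
      change x ∈ J ↔ _
      rw [hz]
    have hz0 : z ≠ 0 := by
      rintro rfl
      have h2 := M.nsmul_index_mem 1
      rw [hM, hMz, mem_idl, zero_dvd_iff] at h2
      have := congrArg Zsqrtd.re h2
      simp at this
      try omega
    obtain ⟨p, q, hp, hq, hpq⟩ := exists_quadrant z hz0
    refine ⟨⟨⟨p, q⟩, hp, hq, ?_⟩, ?_⟩
    · rw [hMz, hpq, idl_index _ (hne _ _ hp), Zsqrtd.norm_def] at hM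
      simp only at hM ⊢
      rw [← hM, Int.natCast_natAbs, abs_of_nonneg (by nlinarith)]
      ring
    · apply Subtype.ext
      apply Subtype.ext
      simp only
      rw [hMz, hpq]

/-- The number of orbits of the multiplication-by-`i` action on index-`n` additive
subgroups of `ℤ[i]` equals `(σ₁(n) + S₂(n))/2` for `n > 2`. -/
theorem gaussian_orbit_count (n : ℕ) (hn : 2 < n) :
    2 * Nat.card (Quot (fun M N : {M : AddSubgroup GaussianInt // M.index = n} =>
      ∃ k : ℕ, (N : AddSubgroup GaussianInt) =
        AddSubgroup.map (AddMonoidHom.mulLeft ((⟨0, 1⟩ : GaussianInt) ^ k)) (M : AddSubgroup GaussianInt)))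
    = ArithmeticFunction.sigma 1 n + S2 n := by
  have hfin : Finite {M : AddSubgroup GaussianInt // M.index = n} :=
    Finite.of_equiv _ (hnfEquiv n (by omega))
  rw [invol_count (mulI n) (mulI_mulI n) _ (rel_iff n), card_index n (by omega),
    card_fixed n (by omega)]
end

section
/- For every positive integer n, σ₁(n) + 2·h(n) is divisible by 3, where h(n) is the number of ordered integer pairs (p, q) with p > 0, q ≥ 0 and p² + pq + q² = n. -/
/-- `h(n)`: the number of ordered integer pairs `(p, q)` with `p > 0`, `q ≥ 0`
and `p² + pq + q² = n`. -/
noncomputable def hcount (n : ℕ) : ℕ :=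
  Nat.card {pq : ℤ × ℤ // 0 < pq.1 ∧ 0 ≤ pq.2 ∧ pq.1 ^ 2 + pq.1 * pq.2 + pq.2 ^ 2 = n}

/-! Proof idea: `σ₁(n)` is the number of index-`n` sublattices of `ℤ[ζ₆]`; rotation by a cube root
of unity permutes them, and the fixed points are the ideals of norm `n`, counted by `h(n)`. -/

namespace SigmaH

/-- lattice spanned by `(u,w)` and `(v,z)` -/
def lat (u v w z : ℤ) : Set (ℤ × ℤ) :=
  {P | ∃ s t : ℤ, P.1 = s * u + t * v ∧ P.2 = s * w + t * z}

/-- being a lattice of determinant `n` -/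
def IsLat (n : ℕ) (L : Set (ℤ × ℤ)) : Prop :=
  ∃ u v w z : ℤ, u * z - v * w = n ∧ L = lat u v w z

lemma lat_comb {n : ℕ} {L : Set (ℤ × ℤ)} (h : IsLat n L) {a b c d : ℤ} (s t : ℤ)
    (h1 : (a, b) ∈ L) (h2 : (c, d) ∈ L) : (s * a + t * c, s * b + t * d) ∈ L := by
  obtain ⟨u, v, w, z, -, rfl⟩ := h
  obtain ⟨s1, t1, h1, h1'⟩ := h1
  obtain ⟨s2, t2, h2, h2'⟩ := h2
  simp only at h1 h1' h2 h2'
  refine ⟨s * s1 + t * s2, s * t1 + t * t2, ?_, ?_⟩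
  · simp only [h1, h2]; ring
  · simp only [h1', h2']; ring

lemma gen1 (u v w z : ℤ) : (u, w) ∈ lat u v w z := ⟨1, 0, by simp, by simp⟩
lemma gen2 (u v w z : ℤ) : (v, z) ∈ lat u v w z := ⟨0, 1, by simp, by simp⟩

lemma lat_sub {n : ℕ} {L : Set (ℤ × ℤ)} (h : IsLat n L) {u v w z : ℤ}
    (h1 : (u, w) ∈ L) (h2 : (v, z) ∈ L) : lat u v w z ⊆ L := by
  rintro ⟨x, y⟩ ⟨s, t, hx, hy⟩
  simp only at hx hy
  rw [hx, hy]
  exact lat_comb h s t h1 h2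

lemma isLat_lat {n : ℕ} {u v w z : ℤ} (h : u * z - v * w = n) : IsLat n (lat u v w z) :=
  ⟨u, v, w, z, h, rfl⟩

lemma det_dvd {u v w z u' v' w' z' : ℤ} (h : lat u v w z ⊆ lat u' v' w' z') :
    (u' * z' - v' * w') ∣ (u * z - v * w) := by
  obtain ⟨s1, t1, h1, h1'⟩ := h (gen1 u v w z)
  obtain ⟨s2, t2, h2, h2'⟩ := h (gen2 u v w z)
  simp only at h1 h1' h2 h2'
  refine ⟨s1 * t2 - s2 * t1, ?_⟩
  rw [h1, h1', h2, h2']; ring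

lemma hnf {n : ℕ} (hn : 0 < n) {L : Set (ℤ × ℤ)} (h : IsLat n L) :
    ∃ d a b : ℕ, a * d = n ∧ b < d ∧ L = lat d b 0 a := by
  have hL := h
  obtain ⟨u, v, w, z, hdet, rfl⟩ := h
  have hg : 0 < Int.gcd w z := by
    rw [Int.gcd_pos_iff]
    by_contra! hc
    rw [hc.1, hc.2] at hdet
    simp at hdet; omega
  obtain ⟨w', hw⟩ : (Int.gcd w z : ℤ) ∣ w := Int.gcd_dvd_left ..
  obtain ⟨z', hz⟩ : (Int.gcd w z : ℤ) ∣ z := Int.gcd_dvd_right ..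
  have hb := Int.gcd_eq_gcd_ab w z
  generalize Int.gcd w z = g at *
  generalize Int.gcdA w z = α at *
  generalize Int.gcdB w z = β at *
  have hg' : (0 : ℤ) < g := by exact_mod_cast hg
  have hbez : w' * α + z' * β = 1 := by
    apply mul_left_cancel₀ hg'.ne'
    calc (g : ℤ) * (w' * α + z' * β) = g * w' * α + g * z' * β := by ring
      _ = g * 1 := by rw [← hw, ← hz, ← hb, mul_one]
  have hd : g * (u * z' - v * w') = (n : ℤ) := by
    rw [← hdet]
    calc g * (u * z' - v * w') = u * (g * z') - v * (g * w') := by ring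
      _ = _ := by rw [← hw, ← hz]
  have hdpos : 0 < u * z' - v * w' := by
    have : 0 < g * (u * z' - v * w') := by rw [hd]; exact_mod_cast hn
    exact (pos_iff_pos_of_mul_pos this).1 hg'
  obtain ⟨d, hdd⟩ := Int.eq_ofNat_of_zero_le hdpos.le
  have hdp : 0 < (d : ℤ) := hdd ▸ hdpos
  set b0 := α * u + β * v with hb0
  obtain ⟨b, hbb⟩ := Int.eq_ofNat_of_zero_le (Int.emod_nonneg b0 hdp.ne')
  have hbl : b0 % d < d := Int.emod_lt_of_pos _ hdp
  have hbe : (b : ℤ) = b0 - (b0 / d) * d := by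
    have := Int.emod_add_mul_ediv b0 d
    rw [← hbb]; linarith
  have hdet2 : (g : ℤ) * d = n := by rw [← hdd]; exact hd
  refine ⟨d, g, b, by exact_mod_cast hdet2, by omega, ?_⟩
  have m1 : ((d : ℤ), (0 : ℤ)) ∈ lat u v w z := by
    refine ⟨z', -w', ?_, ?_⟩
    · simp only [← hdd]; ring
    · simp only [hw, hz]; ring
  have m2' : (b0, (g : ℤ)) ∈ lat u v w z := by
    refine ⟨α, β, hb0, ?_⟩
    simp only; rw [hb]; ring
  have m2 : ((b : ℤ), (g : ℤ)) ∈ lat u v w z := by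
    have := lat_comb hL (-(b0 / d)) 1 m1 m2'
    convert this using 2
    · rw [hbe]; ring
    · ring
  apply Set.Subset.antisymm _ (lat_sub hL m1 m2)
  have hL2 : IsLat n (lat d b 0 g) := isLat_lat (by rw [← hdet2]; ring)
  have k1 := gen1 d b 0 g
  have k2' := gen2 d b 0 g
  have k2 : (b0, (g : ℤ)) ∈ lat d b 0 g := by
    have := lat_comb hL2 (b0 / d) 1 k1 k2'
    convert this using 2
    · rw [hbe]; ring
    · ring
  apply lat_sub hL2
  · have := lat_comb hL2 β w' k1 k2
    convert this using 2
    · rw [← hdd, hb0]; linear_combination (-u) * hbez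
    · rw [hw]; ring
  · have := lat_comb hL2 (-α) z' k1 k2
    convert this using 2
    · rw [← hdd, hb0]; linear_combination (-v) * hbez
    · rw [hz]; ring

lemma hnf_inj_aux {d a b d' a' b' : ℤ}
    (h : lat d b 0 a ⊆ lat d' b' 0 a') : a' ∣ a := by
  obtain ⟨s, t, h1, h2⟩ := h (gen2 d b 0 a)
  exact ⟨t, by simp only at h2; linarith⟩

lemma hnf_inj {n d a b d' a' b' : ℕ} (hn : 0 < n) (h1 : a * d = n) (h1' : a' * d' = n)
    (hb : b < d) (hb' : b' < d') (h : lat d b 0 a = lat d' b' 0 a') : d = d' ∧ b = b' := by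
  have ha : a = a' := Nat.dvd_antisymm (by exact_mod_cast hnf_inj_aux h.ge)
    (by exact_mod_cast hnf_inj_aux h.le)
  subst ha
  have hapos : 0 < a := Nat.pos_of_ne_zero (by rintro rfl; simp at h1; omega)
  have hd : d = d' := Nat.eq_of_mul_eq_mul_left hapos (h1.trans h1'.symm)
  subst hd
  refine ⟨rfl, ?_⟩
  obtain ⟨s, t, h3, h4⟩ := h.le (gen2 d b 0 a)
  simp only at h3 h4
  have ht : t = 1 := by
    have : (a : ℤ) * (t - 1) = 0 := by linear_combination -h4
    rcases mul_eq_zero.1 this with h | h <;> omega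
  subst ht
  have h5 : (b : ℤ) % d = b' % d := by
    rw [h3, one_mul]; simp
  rw [Int.emod_eq_of_lt (by omega) (by omega), Int.emod_eq_of_lt (by omega) (by omega)] at h5
  exact_mod_cast h5

/-- preimage of a lattice under multiplication by a cube root of unity -/
def rot (L : Set (ℤ × ℤ)) : Set (ℤ × ℤ) := {P | (-P.1 - P.2, P.1) ∈ L}

lemma rot_lat {n : ℕ} {L : Set (ℤ × ℤ)} (h : IsLat n L) : IsLat n (rot L) := by
  obtain ⟨u, v, w, z, hdet, rfl⟩ := h
  refine ⟨w, z, -u - w, -v - z, by rw [← hdet]; ring, ?_⟩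
  ext ⟨x, y⟩
  constructor
  · rintro ⟨s, t, h1, h2⟩
    simp only at h1 h2
    exact ⟨s, t, h2, by simp only; linear_combination -h1 - h2⟩
  · rintro ⟨s, t, h1, h2⟩
    simp only at h1 h2
    exact ⟨s, t, by simp only; linear_combination -h1 - h2, h1⟩

lemma rot3 (L : Set (ℤ × ℤ)) : rot (rot (rot L)) = L := by
  ext ⟨x, y⟩
  simp only [rot, Set.mem_ofPred_eq]
  ring_nf

/-- the type of lattices of determinant `n` -/
abbrev Lt (n : ℕ) := {L : Set (ℤ × ℤ) // IsLat n L}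

/-- rotation on lattices -/
def rotL (n : ℕ) : Function.End (Lt n) := fun L => ⟨rot L.1, rot_lat L.2⟩

/-- normal form to lattice -/
def hmap (n : ℕ) : (Σ d : n.divisors, Fin d.1) → Lt n := fun x =>
  ⟨lat x.1.1 x.2.1 0 ((n / x.1.1 : ℕ) : ℤ), isLat_lat (by
    have := Nat.div_mul_cancel (Nat.dvd_of_mem_divisors x.1.2)
    simp only [mul_zero, sub_zero]
    rw [mul_comm]; exact_mod_cast this)⟩

lemma hmap_bij {n : ℕ} (hn : 0 < n) : Function.Bijective (hmap n) := by
  constructor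
  · rintro ⟨⟨d, hd⟩, ⟨b, hb⟩⟩ ⟨⟨d', hd'⟩, ⟨b', hb'⟩⟩ h
    have h := congrArg Subtype.val h
    obtain ⟨rfl, rfl⟩ := hnf_inj hn (Nat.div_mul_cancel (Nat.dvd_of_mem_divisors hd))
      (Nat.div_mul_cancel (Nat.dvd_of_mem_divisors hd')) hb hb' h
    rfl
  · rintro ⟨L, hL⟩
    obtain ⟨d, a, b, h1, hb, rfl⟩ := hnf hn hL
    refine ⟨⟨⟨d, Nat.mem_divisors.2 ⟨⟨a, by rw [← h1, mul_comm]⟩, hn.ne'⟩⟩, ⟨b, hb⟩⟩, ?_⟩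
    apply Subtype.ext
    have : n / d = a := by rw [← h1]; exact Nat.mul_div_cancel _ (by omega)
    simp only [hmap, this]

lemma card_Lt {n : ℕ} (hn : 0 < n) : Nat.card (Lt n) = ArithmeticFunction.sigma 1 n := by
  rw [← Nat.card_congr (Equiv.ofBijective _ (hmap_bij hn)), Nat.card_eq_fintype_card,
    Fintype.card_sigma, ArithmeticFunction.sigma_one_apply]
  simp only [Fintype.card_fin]
  exact Finset.sum_coe_sort n.divisors (fun d => d)

lemma finite_Lt {n : ℕ} (hn : 0 < n) : Finite (Lt n) :=
  Finite.of_surjective _ (hmap_bij hn).2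

/-- ideal lattice generated by `p + qζ` -/
def idl (p q : ℤ) : Set (ℤ × ℤ) := lat p (-q) q (p + q)

lemma rot_idl (p q : ℤ) : rot (idl p q) = idl p q := by
  ext ⟨x, y⟩
  constructor
  · rintro ⟨s, t, h1, h2⟩
    simp only at h1 h2
    refine ⟨t, -s - t, ?_, ?_⟩ <;> simp only
    · linear_combination h2
    · linear_combination -h1 - h2
  · rintro ⟨s, t, h1, h2⟩
    simp only at h1 h2
    refine ⟨-s - t, s, ?_, ?_⟩ <;> simp only
    · linear_combination -h1 - h2
    · linear_combination h1

lemma idl_inj {n : ℕ} (hn : 0 < n) {p q p' q' : ℤ} (hp : 0 < p) (hq : 0 ≤ q) (hp' : 0 < p')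
    (hq' : 0 ≤ q') (h : p ^ 2 + p * q + q ^ 2 = n) (h' : p' ^ 2 + p' * q' + q' ^ 2 = n)
    (hh : idl p q = idl p' q') : p = p' ∧ q = q' := by
  obtain ⟨s, t, h1, h2⟩ := hh.ge (gen1 p' (-q') q' (p' + q'))
  simp only at h1 h2
  have hn' : (n : ℤ) ≠ 0 := by exact_mod_cast hn.ne'
  have e : s ^ 2 + s * t + t ^ 2 = 1 := by
    apply mul_right_cancel₀ hn'
    rw [one_mul]
    nth_rw 2 [← h']
    rw [← h, h1, h2]; ring
  have ht1 : t ≤ 1 := by nlinarith [sq_nonneg (2 * s + t)]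
  have ht2 : -1 ≤ t := by nlinarith [sq_nonneg (2 * s + t)]
  have hs1 : s ≤ 1 := by nlinarith [sq_nonneg (2 * t + s)]
  have hs2 : -1 ≤ s := by nlinarith [sq_nonneg (2 * t + s)]
  interval_cases s <;> interval_cases t <;> first | (exfalso; omega) | (constructor <;> omega)

lemma sector {n : ℕ} {L : Set (ℤ × ℤ)} (hL : IsLat n L) (hr : rot L = L) {x y : ℤ}
    (h : (x, y) ∈ L) (h0 : x ≠ 0 ∨ y ≠ 0) : ∃ p q : ℤ, (p, q) ∈ L ∧ 0 < p ∧ 0 ≤ q ∧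
      p ^ 2 + p * q + q ^ 2 = x ^ 2 + x * y + y ^ 2 := by
  have r1 : ∀ {a b : ℤ}, (a, b) ∈ L → (-a - b, a) ∈ L := by
    intro a b hab
    rw [← hr] at hab
    exact hab
  have ng : ∀ {a b : ℤ}, (a, b) ∈ L → (-a, -b) ∈ L := by
    intro a b hab
    have := lat_comb hL (-1) 0 hab hab
    simpa using this
  have z : ∀ {a b : ℤ}, (a, b) ∈ L → (a + b, -a) ∈ L := by
    intro a b hab
    have := ng (r1 hab)
    convert this using 2; ring
  have z2 : ∀ {a b : ℤ}, (a, b) ∈ L → (b, -a - b) ∈ L := by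
    intro a b hab
    have := z (z hab)
    convert this using 2 <;> ring
  have key : ∀ {x y : ℤ}, (x, y) ∈ L → x ≤ 0 → 0 < y → ∃ p q : ℤ, (p, q) ∈ L ∧ 0 < p ∧ 0 ≤ q ∧
      p ^ 2 + p * q + q ^ 2 = x ^ 2 + x * y + y ^ 2 := by
    intro x y h hx hy
    by_cases hxy : 0 < x + y
    · exact ⟨_, _, z h, hxy, by omega, by ring⟩
    · exact ⟨_, _, z2 h, hy, by omega, by ring⟩
  by_cases hx : 0 < x
  · by_cases hy : 0 ≤ y
    · exact ⟨x, y, h, hx, hy, rfl⟩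
    · obtain ⟨p, q, h1, h2, h3, h4⟩ := key (ng h) (by omega) (by omega)
      exact ⟨p, q, h1, h2, h3, by rw [h4]; ring⟩
  · by_cases hy : 0 < y
    · exact key h (by omega) hy
    · by_cases hx0 : x = 0
      · obtain ⟨p, q, h1, h2, h3, h4⟩ := key (ng h) (by omega) (by omega)
        exact ⟨p, q, h1, h2, h3, by rw [h4]; ring⟩
      · exact ⟨-x, -y, ng h, by omega, by omega, by ring⟩

lemma round (a N : ℤ) (hN : 0 < N) : ∃ k e : ℤ, a = k * N + e ∧ -N ≤ 2 * e ∧ 2 * e ≤ N := by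
  have h1 := Int.emod_add_mul_ediv a N
  have h2 := Int.emod_nonneg a hN.ne'
  have h3 := Int.emod_lt_of_pos a hN
  by_cases h : 2 * (a % N) ≤ N
  · exact ⟨a / N, a % N, by linarith, by linarith, h⟩
  · exact ⟨a / N + 1, a % N - N, by linarith, by linarith, by linarith⟩

lemma idl_surj {n : ℕ} (hn : 0 < n) {L : Set (ℤ × ℤ)} (hL : IsLat n L) (hr : rot L = L) :
    ∃ p q : ℤ, 0 < p ∧ 0 ≤ q ∧ p ^ 2 + p * q + q ^ 2 = n ∧ idl p q = L := by
  classical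
  have ex : ∃ m : ℕ, ∃ p q : ℤ, (p, q) ∈ L ∧ 0 < p ∧ 0 ≤ q ∧ p ^ 2 + p * q + q ^ 2 = m := by
    obtain ⟨d, a, b, h1, h2, h3⟩ := hnf hn hL
    have hm : ((d : ℤ), (0 : ℤ)) ∈ L := h3 ▸ gen1 _ _ _ _
    exact ⟨d ^ 2, d, 0, hm, by omega, le_rfl, by push_cast; ring⟩
  obtain ⟨p, q, hm, hp, hq, hN⟩ := Nat.find_spec ex
  have hmin : ∀ {x y : ℤ}, (x, y) ∈ L → x ^ 2 + x * y + y ^ 2 < p ^ 2 + p * q + q ^ 2 →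
      x = 0 ∧ y = 0 := by
    intro x y hxy hlt
    by_contra hc
    obtain ⟨p', q', h1, h2, h3, h4⟩ := sector hL hr hxy (by tauto)
    rw [← h4] at hlt
    obtain ⟨m, hm⟩ := Int.eq_ofNat_of_zero_le (show 0 ≤ p' ^ 2 + p' * q' + q' ^ 2 by positivity)
    have := Nat.find_min' ex ⟨p', q', h1, h2, h3, hm⟩
    rw [hm, hN] at hlt
    have : m < Nat.find ex := by exact_mod_cast hlt
    omega
  have hm2 : (-q, p + q) ∈ L := by
    have h1 : (-p - q, p) ∈ L := by
      have := hm
      rw [← hr] at this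
      exact this
    have := lat_comb hL 1 1 hm h1
    convert this using 2 <;> ring
  clear hN
  have hsub : idl p q ⊆ L := lat_sub hL hm hm2
  have hNpos : 0 < p ^ 2 + p * q + q ^ 2 := by positivity
  have hsup : L ⊆ idl p q := by
    rintro ⟨x, y⟩ hxy
    obtain ⟨s, e, hs, he1, he2⟩ := round (x * (p + q) + y * q) _ hNpos
    obtain ⟨t, f, ht, hf1, hf2⟩ := round (y * p - x * q) _ hNpos
    have hmem := lat_comb hL 1 (-1) hxy (lat_comb hL s t hm hm2)
    have hz := hmin hmem (by
      set N := p ^ 2 + p * q + q ^ 2 with hNdef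
      have key : N * ((1 * x + -1 * (s * p + t * -q)) ^ 2
          + (1 * x + -1 * (s * p + t * -q)) * (1 * y + -1 * (s * q + t * (p + q)))
          + (1 * y + -1 * (s * q + t * (p + q))) ^ 2) = e ^ 2 + e * f + f ^ 2 := by
        have he : e = x * (p + q) + y * q - s * N := by linarith
        have hf : f = y * p - x * q - t * N := by linarith
        rw [he, hf, hNdef]; ring
      have hb : e ^ 2 + e * f + f ^ 2 < N * N := by
        nlinarith [mul_nonneg (sub_nonneg.2 he1) (sub_nonneg.2 he2),
          mul_nonneg (sub_nonneg.2 hf1) (sub_nonneg.2 hf2), sq_nonneg (e - f), mul_pos hNpos hNpos]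
      rw [← key] at hb
      exact lt_of_mul_lt_mul_left hb hNpos.le)
    exact ⟨s, t, by simp only; linarith [hz.1], by simp only; linarith [hz.2]⟩
  have heq : idl p q = L := hsub.antisymm hsup
  refine ⟨p, q, hp, hq, ?_, heq⟩
  obtain ⟨u, v, w, z, hdet, rfl⟩ := hL
  have d1 := det_dvd hsub
  have d2 := det_dvd hsup
  have e1 : p * (p + q) - -q * q = p ^ 2 + p * q + q ^ 2 := by ring
  rw [hdet, e1] at d1 d2
  exact Int.dvd_antisymm hNpos.le (by omega) d2 d1

/-- pairs to fixed lattices -/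
def fmap (n : ℕ) : {pq : ℤ × ℤ // 0 < pq.1 ∧ 0 ≤ pq.2 ∧ pq.1 ^ 2 + pq.1 * pq.2 + pq.2 ^ 2 = n} →
    Function.fixedPoints (rotL n) := fun x =>
  ⟨⟨idl x.1.1 x.1.2, isLat_lat (by have := x.2.2.2; linear_combination this)⟩, Subtype.ext (rot_idl _ _)⟩

lemma fmap_bij {n : ℕ} (hn : 0 < n) : Function.Bijective (fmap n) := by
  constructor
  · rintro ⟨⟨p, q⟩, h1, h2, h3⟩ ⟨⟨p', q'⟩, h1', h2', h3'⟩ h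
    have h := congrArg (fun L => L.1.1) h
    obtain ⟨rfl, rfl⟩ := idl_inj hn h1 h2 h1' h2' h3 h3' h
    rfl
  · rintro ⟨⟨L, hL⟩, hr⟩
    obtain ⟨p, q, h1, h2, h3, h4⟩ := idl_surj hn hL (congrArg Subtype.val hr)
    exact ⟨⟨⟨p, q⟩, h1, h2, h3⟩, Subtype.ext (Subtype.ext h4)⟩

end SigmaH

open SigmaH in
/-- For every positive integer `n`, `σ₁(n) + 2h(n)` is divisible by `3`. -/
theorem sigma_add_two_h_div_three (n : ℕ) (hn : 0 < n) :
    3 ∣ ArithmeticFunction.sigma 1 n + 2 * hcount n := by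
  classical
  have := finite_Lt hn
  have : Fintype (Lt n) := Fintype.ofFinite _
  have : Fact (Nat.Prime 3) := ⟨Nat.prime_three⟩
  have h := Equiv.Perm.card_fixedPoints_modEq (f := rotL n) (p := 3) (n := 1) (by
    funext L
    exact Subtype.ext (rot3 L.1))
  have h2 : hcount n = Nat.card (Function.fixedPoints (rotL n)) :=
    Nat.card_congr (Equiv.ofBijective _ (fmap_bij hn))
  rw [Fintype.card_eq_nat_card, Fintype.card_eq_nat_card, ← h2, card_Lt hn] at h
  have h : _ % 3 = _ % 3 := h
  omega
end
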